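/- arXiv:1808.05381 — 2 statements merged into one kernel-verified Lean document; each statement's English description precedes it below -/
import Mathlib

section
/- Let K be a field that is an algebraic extension of its prime subfield, and let G be a torsion group whose center Z(G) has finite index in G. Suppose that either K has characteristic 0, or K has characteristic p > 0 and p does not divide the order of g for every g ∈ G. Then every derivation d of the group algebra KG is inner, i.e. there exists b ∈ KG such that d(a) = ab − ba for all a ∈ KG. -/
/-!
Let `d` be a derivation of `R[G]`, where `R` is formally unramified over `ℤ`. Then `d` kills the
scalars, because `Ω[R⁄ℤ] = 0`, so it is `R`-linear and determined by its values on `G`. A central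
`z ∈ G` of order `n` satisfies `0 = d (z ^ n) = n • (z ^ (n - 1) * d z)`, so `d` also kills the
center. Hence the logarithmic derivative `g ↦ d g * g⁻¹`, a `1`-cocycle of `G` acting on `R[G]` by
conjugation, is constant on the cosets of the center, and averaging it over these finitely many
cosets exhibits it as a coboundary, which says that `d` is inner.

For a field `K` algebraic over its prime field `k`, both steps of the tower `ℤ → k → K` are formally
unramified: `k` is a quotient of `ℤ` or isomorphic to `ℚ`, and `K` is separable over `k`, which is
perfect.
-/

open MonoidAlgebra groupCohomology
open scoped nonZeroDivisors

section Cocycle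

variable {G M : Type*} [Group G] [AddCommGroup M] [DistribMulAction G M]

theorem index_nsmul_isCoboundary₁ {f : G → M} (hf : IsCocycle₁ f) (H : Subgroup G)
    [H.FiniteIndex] (hH : ∀ h ∈ H, f h = 0) : IsCoboundary₁ (H.index • f) := by
  have := Fintype.ofFinite (G ⧸ H)
  have map_mul_eq (g : G) {h : G} (hh : h ∈ H) : f (g * h) = f g := by
    rw [hf, hH h hh, smul_zero, zero_add]
  let F : G ⧸ H → M := Quotient.lift f fun a b hab ↦ by
    rw [← map_mul_eq a (QuotientGroup.leftRel_apply.1 hab), mul_inv_cancel_left]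
  have F_smul (g : G) (x : G ⧸ H) : F (g • x) = g • F x + f g :=
    QuotientGroup.induction_on x (hf g)
  refine ⟨-∑ x, F x, fun g ↦ ?_⟩
  have sum_eq : ∑ x, F x = g • ∑ x, F x + H.index • f g :=
    calc ∑ x, F x = ∑ x, F (g • x) := (Equiv.sum_comp (MulAction.toPerm g) F).symm
      _ = g • ∑ x, F x + H.index • f g := by
        simp only [F_smul, Finset.sum_add_distrib, Finset.smul_sum, Finset.sum_const,
          Finset.card_univ, Subgroup.index, Nat.card_eq_fintype_card]
  rw [smul_neg, sub_neg_eq_add, neg_add_eq_iff_eq_add, Pi.smul_apply]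
  exact sum_eq

end Cocycle

section Derivation

variable {A : Type*} [Ring A] {d : A →+ A}

/-- An additive endomorphism of a possibly noncommutative ring is a derivation if it satisfies the
Leibniz rule. Mathlib's `Derivation` covers only commutative rings. -/
def IsDerivation (d : A →+ A) : Prop :=
  ∀ a b, d (a * b) = d a * b + a * d b

namespace IsDerivation

theorem map_one (hd : IsDerivation d) : d 1 = 0 := by
  simpa using hd 1 1

theorem map_pow_of_commute (hd : IsDerivation d) {a : A} (ha : Commute a (d a)) (n : ℕ) :
    d (a ^ n) = n • (a ^ (n - 1) * d a) := by
  induction n with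
  | zero => simp [hd.map_one]
  | succ n ih =>
    have mul_map_pow : a * d (a ^ n) = n • (a ^ n * d a) := by
      rcases n.eq_zero_or_pos with rfl | hn
      · simp [hd.map_one]
      · rw [ih, mul_smul_comm, ← mul_assoc, mul_pow_sub_one hn.ne']
    rw [pow_succ', hd, mul_map_pow, ← (ha.pow_left n).eq, add_tsub_cancel_right, succ_nsmul']

theorem nsmul_map_eq_zero_of_pow_eq_one (hd : IsDerivation d) {a : A} (ha : Commute a (d a))
    {n : ℕ} (hn : a ^ n = 1) : n • d a = 0 := by
  rcases n.eq_zero_or_pos with rfl | hpos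
  · rw [zero_smul]
  · calc n • d a = a * (n • (a ^ (n - 1) * d a)) := by
          rw [mul_smul_comm, ← mul_assoc, mul_pow_sub_one hpos.ne', hn, one_mul]
      _ = 0 := by rw [← hd.map_pow_of_commute ha, hn, hd.map_one, mul_zero]

theorem exists_index_nsmul_eq (hd : IsDerivation d) {G : Type*} [Group G] (u : G →* Aˣ)
    (H : Subgroup G) [H.FiniteIndex] (hH : ∀ h ∈ H, d (u h) = 0) :
    ∃ b : A, ∀ g, H.index • d (u g) = u g * b - b * u g := by
  let conj : DistribMulAction G A :=
    DistribMulAction.compHom A (ConjAct.toConjAct.toMonoidHom.comp u)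
  have smul_eq (g : G) (a : A) : g • a = u g * a * ↑(u g)⁻¹ := rfl
  have hcocycle : IsCocycle₁ fun g ↦ d (u g) * ↑(u g)⁻¹ := fun g h ↦ by
    simp only [smul_eq, map_mul, Units.val_mul, hd (u g), mul_inv_rev, add_mul, mul_assoc,
      Units.mul_inv_cancel_left]
    rw [add_comm]
  obtain ⟨b, hb⟩ := index_nsmul_isCoboundary₁ hcocycle H fun h hh ↦ by rw [hH h hh, zero_mul]
  refine ⟨b, fun g ↦ ?_⟩
  calc H.index • d (u g) = H.index • (d (u g) * ↑(u g)⁻¹) * u g := by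
        rw [smul_mul_assoc, Units.inv_mul_cancel_right]
    _ = (g • b - b) * u g := by rw [hb g, Pi.smul_apply]
    _ = u g * b - b * u g := by rw [smul_eq, sub_mul, Units.inv_mul_cancel_right]

section Algebra

variable {R : Type*} [CommRing R] [Algebra R A] [Algebra.FormallyUnramified ℤ R]

theorem map_algebraMap (hd : IsDerivation d) (r : R) : d (algebraMap R A r) = 0 := by
  let D : Derivation ℤ R A :=
    Derivation.mk' (d.comp (algebraMap R A).toAddMonoidHom).toIntLinearMap fun r s ↦ by
      simp [hd (algebraMap R A r), Algebra.smul_def, Algebra.commutes s, add_comm]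
  change D r = 0
  rw [← D.liftKaehlerDifferential_comp_D, Subsingleton.elim (KaehlerDifferential.D ℤ R r) 0,
    map_zero]

theorem map_smul (hd : IsDerivation d) (r : R) (a : A) : d (r • a) = r • d a := by
  rw [Algebra.smul_def, hd, hd.map_algebraMap, zero_mul, zero_add, ← Algebra.smul_def]

end Algebra

end IsDerivation

end Derivation

section GroupAlgebra

variable {R G : Type*} [Group G]

theorem of_commute_of_mem_center [Semiring R] {z : G} (hz : z ∈ Subgroup.center G)
    (a : MonoidAlgebra R G) : Commute (of R G z) a :=
  single_commute (fun g ↦ (Subgroup.mem_center_iff.1 hz g).symm) (fun r ↦ Commute.one_left r) a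

theorem IsDerivation.map_of_eq_zero_of_mem_center [Ring R]
    {d : MonoidAlgebra R G →+ MonoidAlgebra R G} (hd : IsDerivation d) {z : G}
    (hz : z ∈ Subgroup.center G) (hord : (orderOf z : R) ∈ R⁰) : d (of R G z) = 0 := by
  have hsmul : (orderOf z : R) • d (of R G z) = 0 := by
    rw [Nat.cast_smul_eq_nsmul]
    refine hd.nsmul_map_eq_zero_of_pow_eq_one (of_commute_of_mem_center hz _) ?_
    rw [← map_pow, pow_orderOf_eq_one, (of R G).map_one]
  ext g
  exact (mem_nonZeroDivisors_iff.1 hord).1 _ congr(coeff $hsmul g)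

theorem derivation_groupAlgebra_isInner_general [CommRing R]
    [Algebra.FormallyUnramified ℤ R] [(Subgroup.center G).FiniteIndex]
    (hindex : IsUnit ((Subgroup.center G).index : R))
    (hord : ∀ z ∈ Subgroup.center G, (orderOf z : R) ∈ R⁰)
    {d : MonoidAlgebra R G →+ MonoidAlgebra R G} (hd : IsDerivation d) :
    ∃ b : MonoidAlgebra R G, ∀ a : MonoidAlgebra R G, d a = a * b - b * a := by
  obtain ⟨b, hb⟩ := hd.exists_index_nsmul_eq (of R G).toHomUnits (Subgroup.center G)
    fun z hz ↦ hd.map_of_eq_zero_of_mem_center hz (hord z hz)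
  simp only [MonoidHom.coe_toHomUnits] at hb
  obtain ⟨n, hn⟩ := hindex
  refine ⟨n⁻¹ • b, fun a ↦ ?_⟩
  induction a using MonoidAlgebra.induction_on with
  | of g =>
    rw [mul_smul_comm, smul_mul_assoc, ← smul_sub, ← hb, eq_inv_smul_iff, Units.smul_def, hn,
      Nat.cast_smul_eq_nsmul]
  | add a a' ha ha' => rw [map_add, ha, ha', add_mul, mul_add]; abel
  | smul r a ha => rw [hd.map_smul, ha, smul_mul_assoc r, mul_smul_comm r, smul_sub]

end GroupAlgebra

section PrimeField

variable {K : Type*} [Field K]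

theorem perfectField_bot : PerfectField (⊥ : Subfield K) := by
  obtain ⟨p, _ | _⟩ := ExpChar.exists K
  · infer_instance
  · have := Fact.mk ‹p.Prime›
    have := Subfield.fintypeBot K p
    infer_instance

theorem formallyUnramified_int_bot : Algebra.FormallyUnramified ℤ (⊥ : Subfield K) := by
  obtain ⟨p, _ | _⟩ := ExpChar.exists K
  · rw [Subfield.bot_eq_of_charZero]
    have : Algebra.FormallyUnramified ℤ ℚ := .of_isLocalization (nonZeroDivisors ℤ)
    exact .of_surjective (algebraMap ℚ K).rangeRestrictField.toIntAlgHom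
      (algebraMap ℚ K).rangeRestrictField_bijective.surjective
  · have := Fact.mk ‹p.Prime›
    refine .of_surjective (Algebra.ofId ℤ (⊥ : Subfield K)) fun ⟨x, hx⟩ ↦ ?_
    obtain ⟨n, rfl⟩ := (mem_bot_iff_intCast p _).1 hx
    exact ⟨n, rfl⟩

theorem formallyUnramified_int_of_isAlgebraic_bot
    (h : ∀ x : K, IsAlgebraic (⊥ : Subfield K) x) : Algebra.FormallyUnramified ℤ K := by
  have : Algebra.IsAlgebraic (⊥ : Subfield K) K := ⟨h⟩
  have := perfectField_bot (K := K)
  have := formallyUnramified_int_bot (K := K)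
  have : Algebra.FormallyUnramified (⊥ : Subfield K) K := .of_isSeparable _ _
  exact .comp ℤ (⊥ : Subfield K) K

end PrimeField

section Order

variable {R G : Type*} [Group G]

theorem natCast_orderOf_ne_zero [NonAssocSemiring R] {g : G} (hg : IsOfFinOrder g)
    (h : ringChar R = 0 ∨ ¬ ringChar R ∣ orderOf g) : (orderOf g : R) ≠ 0 := by
  rw [Ne, ringChar.spec]
  rcases h with h | h
  · rw [h, zero_dvd_iff]
    exact hg.orderOf_pos.ne'
  · exact h

theorem natCast_index_ne_zero [NonAssocSemiring R] [NoZeroDivisors R] [Nontrivial R]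
    (N : Subgroup G) [N.Normal] [N.FiniteIndex] (h : ∀ g : G, (orderOf g : R) ≠ 0) :
    (N.index : R) ≠ 0 := by
  intro hindex
  have hdvd := (ringChar.spec R N.index).1 hindex
  rcases CharP.char_is_prime_or_zero R (ringChar R) with hp | h0
  · have := Fact.mk hp
    obtain ⟨x, hx⟩ := exists_prime_orderOf_dvd_card' (G := G ⧸ N) (ringChar R) hdvd
    obtain ⟨g, rfl⟩ := QuotientGroup.mk'_surjective N x
    exact h g ((ringChar.spec R _).2 (hx ▸ orderOf_map_dvd _ g))
  · rw [h0, zero_dvd_iff] at hdvd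
    exact Subgroup.FiniteIndex.index_ne_zero hdvd

end Order

/-- Let `K` be a field which is an algebraic extension of its prime subfield,
and let `G` be a torsion group whose center has finite index in `G`. Suppose that either
`char K = 0` or `char K = p > 0` and `p` does not divide the order of any `g ∈ G`. Then every
derivation of the group algebra `K G` is inner. -/
theorem derivation_groupAlgebra_isInner {K : Type*} [Field K]
    (halg : ∀ x : K, IsAlgebraic (⊥ : Subfield K) x)
    {G : Type*} [Group G] (htor : ∀ g : G, IsOfFinOrder g)
    [hfin : (Subgroup.center G).FiniteIndex]
    (hchar : ringChar K = 0 ∨ (ringChar K ≠ 0 ∧ ∀ g : G, ¬ (ringChar K ∣ orderOf g)))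
    (d : MonoidAlgebra K G → MonoidAlgebra K G)
    (hadd : ∀ a b, d (a + b) = d a + d b)
    (hleib : ∀ a b, d (a * b) = d a * b + a * d b) :
    ∃ b : MonoidAlgebra K G, ∀ a : MonoidAlgebra K G, d a = a * b - b * a := by
  have := formallyUnramified_int_of_isAlgebraic_bot halg
  have hord (g : G) : (orderOf g : K) ≠ 0 :=
    natCast_orderOf_ne_zero (htor g) (hchar.imp_right fun h ↦ h.2 g)
  exact derivation_groupAlgebra_isInner_general (natCast_index_ne_zero _ hord).isUnit
    (fun z _ ↦ mem_nonZeroDivisors_of_ne_zero (hord z)) (d := AddMonoidHom.mk' d hadd) hleib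
end

section
/- Let n > 2 be an even integer, let m ≥ 1, and let K = F_{2^m} be a finite field with 2^m elements. Then the set Der(K D_{2n}) of derivations of the group algebra of the dihedral group D_{2n} of order 2n is a K-vector space of dimension 2n + 4. -/
/-- The `K`-subspace of `K`-linear endomorphisms of a `K`-algebra `A` satisfying the Leibniz
rule, i.e. the space `Der(A)` of (`K`-linear) derivations of `A`. -/
def DerSub (K A : Type*) [CommSemiring K] [Ring A] [Algebra K A] :
    Submodule K (A →ₗ[K] A) where
  carrier := {d | ∀ a b : A, d (a * b) = d a * b + a * d b}
  zero_mem' := by intro a b; simp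
  add_mem' := by
    intro d e hd he a b
    simp only [LinearMap.add_apply, hd a b, he a b, add_mul, mul_add]
    abel
  smul_mem' := by
    intro c d hd a b
    simp only [LinearMap.smul_apply, hd a b, smul_add, smul_mul_assoc, mul_smul_comm]

/-!
In characteristic two, applying a derivation `d` to `s * s = 1` shows that `d s` commutes with `s`.
The dihedral group is generated by the involutions `s = sr 0` and `t = sr 1` subject to
`(s * t) ^ n = 1`, and conversely any `a` commuting with `s` and `b` commuting with `t` are the
values of a derivation. Indeed derivations are the homomorphisms to the dual numbers that lift the
identity, and the square of `x + ε y` is `x * x` when `x` and `y` commute, so `s + ε a` and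
`t + ε b` are involutions. The remaining relation holds since the `n / 2`-th power of their
product has the central element `r (n / 2)` as constant term, so that its square is `r n = 1`.

The dimension is therefore the sum of those of the centralizers of `s` and `t` in the group algebra.
Each is the number of orbits of conjugation by an involution whose centralizer in the group has
order four, which is `(2 * n + 4) / 2` by Burnside's lemma.
-/

open DihedralGroup MonoidAlgebra MulAction TrivSqZeroExt

namespace DerSub

variable {K A : Type*} [CommSemiring K] [Ring A] [Algebra K A]

theorem leibniz (d : DerSub K A) (a b : A) : d.1 (a * b) = d.1 a * b + a * d.1 b :=
  d.2 a b

theorem apply_one (d : DerSub K A) : d.1 1 = 0 := by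
  simpa using leibniz d 1 1

/-- The algebra homomorphism `a ↦ a + ε d(a)` into the dual numbers attached to a derivation `d`. -/
def toDualNumber (d : DerSub K A) : A →ₐ[K] DualNumber A :=
  .ofLinearMap ((inlAlgHom K A A).toLinearMap + (inrHom A A).restrictScalars K ∘ₗ d.1)
    (by ext <;> simp [apply_one d]) fun a b ↦ by ext <;> simp [leibniz d, add_comm]

theorem toDualNumber_injective : Function.Injective (toDualNumber (K := K) (A := A)) := by
  intro d e h
  ext a
  simpa [toDualNumber] using congrArg (fun F ↦ (F a).snd) h

/-- The derivation `a ↦ (F a).snd` attached to an algebra homomorphism `F : A → A[ε]` that is the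
identity modulo `ε`. -/
def ofDualNumber (F : A →ₐ[K] DualNumber A) (hF : (fstHom K A A).comp F = AlgHom.id K A) :
    DerSub K A where
  val := (sndHom A A).restrictScalars K ∘ₗ F.toLinearMap
  property a b := by
    have fst_apply (x : A) : (F x).fst = x := DFunLike.congr_fun hF x
    simp [fst_apply, add_comm]

theorem commute_apply_of_mul_self_eq_one [CharP A 2] (d : DerSub K A) {s : A}
    (hs : s * s = 1) : Commute s (d.1 s) := by
  have h : d.1 s * s + s * d.1 s = 0 := by rw [← leibniz d, hs, apply_one d]
  exact (CharTwo.add_eq_zero.mp h).symm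

/-- Evaluation of derivations at an element `s` of square one in characteristic two; its values
lie in the centralizer of `s`. -/
def evalCentralizer [CharP A 2] {s : A} (hs : s * s = 1) :
    DerSub K A →ₗ[K] Subalgebra.centralizer K {s} where
  toFun d := ⟨d.1 s, by rintro _ rfl; exact commute_apply_of_mul_self_eq_one d hs⟩
  map_add' _ _ := rfl
  map_smul' _ _ := rfl

end DerSub

theorem dualNumber_mul_self_of_commute {A : Type*} [Semiring A] [CharP A 2] {z : DualNumber A}
    (hz : Commute z.fst z.snd) : z * z = inl (z.fst * z.fst) := by
  ext
  · simp
  · simp [hz.eq, CharTwo.add_self_eq_zero]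

section Dihedral

variable {n : ℕ}

theorem exists_dihedralGroup_hom_group {G : Type*} [Group G] {s t : G} (hs : s * s = 1)
    (ht : t * t = 1) (hst : (s * t) ^ n = 1) :
    ∃ f : DihedralGroup n →* G, f (sr 0) = s ∧ f (sr 1) = t := by
  let ρ (i : ZMod n) : G := (s * t) ^ (i.cast : ℤ)
  have ρ_intCast (z : ℤ) : ρ z = (s * t) ^ z := by
    simp only [ρ, ZMod.coe_intCast]
    exact (zpow_eq_zpow_emod' z hst).symm
  have ρ_add (i j : ZMod n) : ρ (i + j) = ρ i * ρ j := by
    obtain ⟨a, rfl⟩ := ZMod.intCast_surjective i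
    obtain ⟨b, rfl⟩ := ZMod.intCast_surjective j
    rw [← Int.cast_add, ρ_intCast, ρ_intCast, ρ_intCast, zpow_add]
  have conj : SemiconjBy s (s * t)⁻¹ (s * t) := by
    rw [SemiconjBy, mul_inv_rev, inv_eq_of_mul_eq_one_left hs, inv_eq_of_mul_eq_one_left ht,
      mul_assoc]
  have ρ_conj (i : ZMod n) : ρ i * s = s * ρ (-i) := by
    obtain ⟨a, rfl⟩ := ZMod.intCast_surjective i
    rw [← Int.cast_neg, ρ_intCast, ρ_intCast, zpow_neg, ← inv_zpow, (conj.zpow_right a).eq]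
  let f : DihedralGroup n → G
    | r i => ρ i
    | sr i => s * ρ i
  refine ⟨.mk' f ?_, ?_, ?_⟩
  · rintro (i | i) (j | j)
    · exact ρ_add i j
    · change s * ρ (j - i) = ρ i * (s * ρ j)
      rw [sub_eq_neg_add, ρ_add, ← mul_assoc, ← mul_assoc, ρ_conj]
    · change s * ρ (i + j) = s * ρ i * ρ j
      rw [ρ_add, mul_assoc]
    · change ρ (j - i) = s * ρ i * (s * ρ j)
      rw [mul_assoc, ← mul_assoc (ρ i), ρ_conj, ← mul_assoc, ← mul_assoc, hs, one_mul, ← ρ_add,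
        sub_eq_neg_add]
  · change s * ρ 0 = s
    rw [← Int.cast_zero, ρ_intCast, zpow_zero, mul_one]
  · change s * ρ 1 = t
    rw [← Int.cast_one, ρ_intCast, zpow_one, ← mul_assoc, hs, one_mul]

theorem exists_dihedralGroup_hom {M : Type*} [Monoid M] {s t : M} (hs : s * s = 1)
    (ht : t * t = 1) (hst : (s * t) ^ n = 1) :
    ∃ f : DihedralGroup n →* M, f (sr 0) = s ∧ f (sr 1) = t := by
  let S : Mˣ := ⟨s, s, hs, hs⟩
  let T : Mˣ := ⟨t, t, ht, ht⟩
  obtain ⟨f, hfs, hft⟩ := exists_dihedralGroup_hom_group (n := n) (s := S) (t := T)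
    (Units.ext hs) (Units.ext ht) (Units.ext hst)
  exact ⟨(Units.coeHom M).comp f, congrArg Units.val hfs, congrArg Units.val hft⟩

theorem dihedralGroup_hom_ext {M : Type*} [Monoid M] [NeZero n] {f g : DihedralGroup n →* M}
    (h0 : f (sr 0) = g (sr 0)) (h1 : f (sr 1) = g (sr 1)) : f = g := by
  have map_r (i : ZMod n) : f (r i) = g (r i) := by
    have : r i = (sr 0 * sr 1) ^ i.val := by simp
    rw [this, map_pow, map_pow, map_mul, map_mul, h0, h1]
  ext (i | i)
  · exact map_r i
  · have : sr i = sr 0 * r i := by simp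
    rw [this, map_mul, map_mul, h0, map_r]

theorem natCast_half_add_half {k : ℕ} (hk : n = k + k) : (k : ZMod n) + k = 0 := by
  rw [← Nat.cast_add, ← hk, ZMod.natCast_self]

theorem zmod_add_self_eq_zero_iff [NeZero n] {k : ℕ} (hk : n = k + k) {j : ZMod n} :
    j + j = 0 ↔ j = 0 ∨ j = k := by
  refine ⟨fun hj ↦ ?_, ?_⟩
  · refine ((ZMod.neg_eq_self_iff j).mp (neg_eq_of_add_eq_zero_left hj)).imp_right fun hval ↦ ?_
    rw [← ZMod.natCast_zmod_val j, show j.val = k by omega]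
  · rintro (rfl | rfl)
    · exact add_zero 0
    · exact natCast_half_add_half hk

theorem coe_centralizer_sr [NeZero n] {k : ℕ} (hk : n = k + k) (i : ZMod n) :
    (Subgroup.centralizer {sr i} : Set (DihedralGroup n)) =
      {r 0, r (k : ZMod n), sr i, sr (i + (k : ZMod n))} := by
  ext (j | j)
  · have : i - j = i + j ↔ j + j = 0 := by grind
    simp [-r_zero, Subgroup.mem_centralizer_singleton_iff, this, zmod_add_self_eq_zero_iff hk]
  · have : i - j = j - i ↔ (j - i) + (j - i) = 0 := by grind
    simp [-r_zero, Subgroup.mem_centralizer_singleton_iff, this, zmod_add_self_eq_zero_iff hk,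
      sub_eq_iff_eq_add, add_comm]

theorem card_centralizer_sr [NeZero n] (hn : Even n) (i : ZMod n) :
    Nat.card (Subgroup.centralizer {(sr i : DihedralGroup n)}) = 4 := by
  obtain ⟨k, hk⟩ := hn
  have half_ne_zero : (k : ZMod n) ≠ 0 := by
    rw [Ne, ZMod.natCast_eq_zero_iff]
    have := NeZero.ne n
    exact Nat.not_dvd_of_pos_of_lt (by omega) (by omega)
  rw [← SetLike.coe_sort_coe, coe_centralizer_sr hk, Nat.card_coe_set_eq,
    Set.ncard_insert_of_notMem, Set.ncard_insert_of_notMem, Set.ncard_pair] <;>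
  simp [-r_zero, half_ne_zero, half_ne_zero.symm]

end Dihedral

theorem two_mul_card_orbits_zpowers {G X : Type*} [Group G] [MulAction G X] [Finite X] {g : G}
    (hg : orderOf g = 2) :
    2 * Nat.card (orbitRel.Quotient (Subgroup.zpowers g) X) =
      Nat.card X + Nat.card (fixedBy X g) := by
  classical
  let H := Subgroup.zpowers g
  let γ : H := ⟨g, Subgroup.mem_zpowers g⟩
  have : Finite H := Nat.finite_of_card_ne_zero (by simp [H, hg])
  have := Fintype.ofFinite H
  have hγ : (1 : H) ≠ γ := fun h ↦ by simp [show g = 1 from congrArg Subtype.val h.symm] at hg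
  have univ_eq : (Finset.univ : Finset H) = {1, γ} := by
    refine (Finset.eq_of_subset_of_card_le (Finset.subset_univ _) ?_).symm
    rw [Finset.card_pair hγ, Finset.card_univ, ← Nat.card_eq_fintype_card, Nat.card_zpowers, hg]
  have burnside := Nat.card_congr (sigmaFixedByEquivOrbitsProdGroup H X)
  rw [Nat.card_sigma, Nat.card_prod, Nat.card_zpowers, hg, univ_eq, Finset.sum_pair hγ] at burnside
  rw [mul_comm, ← burnside]
  simp only [fixedBy_one_eq_univ, Nat.card_coe_set_eq, Set.ncard_univ, Nat.add_left_cancel_iff]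
  rfl

instance charP_monoidAlgebra {K G : Type*} [Semiring K] [Monoid G] (p : ℕ) [CharP K p] :
    CharP (MonoidAlgebra K G) p :=
  charP_of_injective_ringHom (f := singleOneRingHom)
    (fun x y h ↦ by simpa using congrArg (coeff · (1 : G)) h) p

section Centralizer

variable {K G : Type*} [CommSemiring K] [Group G]

theorem commute_single_iff {g : G} {a : MonoidAlgebra K G} :
    Commute (single g 1) a ↔ ∀ h, a.coeff (g * h * g⁻¹) = a.coeff h := by
  have coeff_eq (h : G) : (single g 1 * a).coeff (g * h) = (a * single g 1).coeff (g * h) ↔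
      a.coeff (g * h * g⁻¹) = a.coeff h := by
    simp [eq_comm]
  simp only [← coeff_eq]
  refine ⟨fun H h ↦ by rw [H.eq], fun H ↦ ?_⟩
  ext h
  simpa using H (g⁻¹ * h)

theorem coeff_smul_of_commute_single [Finite G] {g : G} {a : MonoidAlgebra K G}
    (ha : Commute (single g 1) a) {c : ConjAct G}
    (hc : c ∈ Subgroup.zpowers (ConjAct.toConjAct g)) (h : G) : a.coeff (c • h) = a.coeff h := by
  have : Finite (ConjAct G) := inferInstanceAs (Finite G)
  obtain ⟨k, rfl⟩ := mem_powers_iff_mem_zpowers.mpr hc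
  have comm_pow : Commute (single (g ^ k) 1) a := by simpa [single_pow] using ha.pow_left k
  exact commute_single_iff.mp comm_pow h

/-- An element of the group algebra commutes with `g` exactly when its coefficients are constant on
the orbits of conjugation by `g`, which identifies the centralizer of `g` with the functions on
these orbits. -/
noncomputable def centralizerSingleEquiv [Finite G] (g : G) :
    Subalgebra.centralizer K {(single g 1 : MonoidAlgebra K G)} ≃ₗ[K]
      (orbitRel.Quotient (Subgroup.zpowers (ConjAct.toConjAct g)) G → K) where
  toFun a := Quotient.lift a.1.coeff <| by
    rintro _ h ⟨c, rfl⟩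
    exact coeff_smul_of_commute_single (a.2 _ rfl) c.2 h
  invFun φ := ⟨.ofCoeff (Finsupp.equivFunOnFinite.symm (φ ∘ Quotient.mk _)), by
    rintro _ rfl
    refine commute_single_iff.mpr fun h ↦ congrArg φ ?_
    exact orbitRel.Quotient.quotient_smul_eq
      (g := (⟨_, Subgroup.mem_zpowers _⟩ : Subgroup.zpowers (ConjAct.toConjAct g)))⟩
  map_add' a b := by
    ext ⟨h⟩
    simp only [AddMemClass.coe_add, coeff_add, Finsupp.coe_add, Pi.add_apply]
    rfl
  map_smul' c a := by
    ext ⟨h⟩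
    simp only [SetLike.val_smul, coeff_smul, Finsupp.coe_smul, Pi.smul_apply, smul_eq_mul,
      RingHom.id_apply]
    rfl
  left_inv a := by
    ext h
    simp
  right_inv φ := by
    ext ⟨h⟩
    rfl

theorem two_mul_card_conj_orbits [Finite G] {g : G} (hg : orderOf g = 2) :
    2 * Nat.card (orbitRel.Quotient (Subgroup.zpowers (ConjAct.toConjAct g)) G) =
      Nat.card G + Nat.card (Subgroup.centralizer {g}) := by
  have fixed_eq : fixedBy G (ConjAct.toConjAct g) = Subgroup.centralizer {g} := by
    ext h
    rw [mem_fixedBy, ConjAct.toConjAct_smul, mul_inv_eq_iff_eq_mul, SetLike.mem_coe,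
      Subgroup.mem_centralizer_singleton_iff, eq_comm]
  rw [two_mul_card_orbits_zpowers (by rwa [ConjAct.toConjAct.orderOf_eq]), fixed_eq]
  rfl

instance [Finite G] (g : G) :
    Module.Free K (Subalgebra.centralizer K {(single g 1 : MonoidAlgebra K G)}) :=
  .of_equiv (centralizerSingleEquiv g).symm

instance [Finite G] (g : G) :
    Module.Finite K (Subalgebra.centralizer K {(single g 1 : MonoidAlgebra K G)}) :=
  .equiv (centralizerSingleEquiv g).symm

theorem two_mul_finrank_centralizer_single [StrongRankCondition K] [Finite G] {g : G}
    (hg : orderOf g = 2) :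
    2 * Module.finrank K (Subalgebra.centralizer K {(single g 1 : MonoidAlgebra K G)}) =
      Nat.card G + Nat.card (Subgroup.centralizer {g}) := by
  have := Fintype.ofFinite (orbitRel.Quotient (Subgroup.zpowers (ConjAct.toConjAct g)) G)
  rw [(centralizerSingleEquiv g).finrank_eq, Module.finrank_fintype_fun_eq_card,
    ← Nat.card_eq_fintype_card, two_mul_card_conj_orbits hg]

end Centralizer

section DihedralAlgebra

variable {K : Type*} [CommSemiring K] {n : ℕ}

theorem dihedralAlgebra_algHom_ext [NeZero n] {B : Type*} [Semiring B] [Algebra K B]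
    {F F' : MonoidAlgebra K (DihedralGroup n) →ₐ[K] B}
    (h0 : F (single (sr 0) 1) = F' (single (sr 0) 1))
    (h1 : F (single (sr 1) 1) = F' (single (sr 1) 1)) : F = F' := by
  refine algHom_ext' (dihedralGroup_hom_ext h0 h1) ?_
  ext

theorem exists_dihedralAlgebra_algHom {B : Type*} [Semiring B] [Algebra K B] {s t : B}
    (hs : s * s = 1) (ht : t * t = 1) (hst : (s * t) ^ n = 1) :
    ∃ F : MonoidAlgebra K (DihedralGroup n) →ₐ[K] B, F (single (sr 0) 1) = s ∧
      F (single (sr 1) 1) = t := by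
  obtain ⟨f, rfl, rfl⟩ := exists_dihedralGroup_hom hs ht hst
  exact ⟨lift K B _ f, by simp, by simp⟩

theorem commute_single_r_half {k : ℕ} (hk : n = k + k) (a : MonoidAlgebra K (DihedralGroup n)) :
    Commute (single (r k) 1) a := by
  refine single_commute ?_ (.one_left) a
  rintro (j | j)
  · simp [Commute, SemiconjBy, add_comm]
  · simp [Commute, SemiconjBy, sub_eq_iff_eq_add, add_assoc, natCast_half_add_half hk]

theorem single_sr_mul_self (i : ZMod n) :
    (single (sr i) 1 * single (sr i) 1 : MonoidAlgebra K (DihedralGroup n)) = 1 := by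
  rw [single_mul_single, sr_mul_self, one_mul]
  rfl

theorem finrank_centralizer_single_sr [StrongRankCondition K] [NeZero n] (hn : Even n)
    (i : ZMod n) :
    Module.finrank K
      (Subalgebra.centralizer K {(single (sr i) 1 : MonoidAlgebra K (DihedralGroup n))}) =
      n + 2 := by
  have := two_mul_finrank_centralizer_single (K := K) (orderOf_sr i)
  rw [nat_card, card_centralizer_sr hn] at this
  omega

end DihedralAlgebra

section Derivations

variable {K : Type*} [CommRing K] {n : ℕ}

theorem derSub_dihedralAlgebra_ext [NeZero n] {d e : DerSub K (MonoidAlgebra K (DihedralGroup n))}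
    (h0 : d.1 (single (sr 0) 1) = e.1 (single (sr 0) 1))
    (h1 : d.1 (single (sr 1) 1) = e.1 (single (sr 1) 1)) : d = e := by
  refine DerSub.toDualNumber_injective (dihedralAlgebra_algHom_ext ?_ ?_)
  · ext <;> simp [DerSub.toDualNumber, h0]
  · ext <;> simp [DerSub.toDualNumber, h1]

theorem exists_derSub_dihedralAlgebra_apply_eq [CharP K 2] [NeZero n] (hn : Even n)
    {a b : MonoidAlgebra K (DihedralGroup n)}
    (ha : Commute (single (sr 0) 1) a) (hb : Commute (single (sr 1) 1) b) :
    ∃ d : DerSub K (MonoidAlgebra K (DihedralGroup n)),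
      d.1 (single (sr 0) 1) = a ∧ d.1 (single (sr 1) 1) = b := by
  let S : DualNumber (MonoidAlgebra K (DihedralGroup n)) := inl (single (sr 0) 1) + inr a
  let T : DualNumber (MonoidAlgebra K (DihedralGroup n)) := inl (single (sr 1) 1) + inr b
  have hS : S * S = 1 := by
    rw [dualNumber_mul_self_of_commute (by simpa [S])]
    simp only [S, fst_add, fst_inl, fst_inr, add_zero, single_sr_mul_self, inl_one]
  have hT : T * T = 1 := by
    rw [dualNumber_mul_self_of_commute (by simpa [T])]
    simp only [T, fst_add, fst_inl, fst_inr, add_zero, single_sr_mul_self, inl_one]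
  have hST : (S * T) ^ n = 1 := by
    obtain ⟨k, hk⟩ := hn
    have fst_pow : ((S * T) ^ k).fst = single (r k) 1 := by
      simp [S, T, single_pow]
    rw [congrArg (_ ^ ·) hk, pow_add, dualNumber_mul_self_of_commute, fst_pow]
    · rw [single_mul_single, r_mul_r, natCast_half_add_half hk, one_mul]
      rfl
    · rw [fst_pow]
      exact commute_single_r_half hk _
  obtain ⟨F, hFS, hFT⟩ := exists_dihedralAlgebra_algHom (K := K) hS hT hST
  refine ⟨DerSub.ofDualNumber F (dihedralAlgebra_algHom_ext ?_ ?_), ?_, ?_⟩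
  · simp [hFS, S]
  · simp [hFT, T]
  · simp [DerSub.ofDualNumber, hFS, S]
  · simp [DerSub.ofDualNumber, hFT, T]

/-- In characteristic two and for even `n`, a derivation of the group algebra of the dihedral group
amounts to a pair of elements centralizing the generating reflections `sr 0` and `sr 1`, namely
its values there. -/
noncomputable def derSubDihedralEquiv [CharP K 2] [NeZero n] (hn : Even n) :
    DerSub K (MonoidAlgebra K (DihedralGroup n)) ≃ₗ[K]
      Subalgebra.centralizer K {(single (sr 0) 1 : MonoidAlgebra K (DihedralGroup n))} ×
        Subalgebra.centralizer K {(single (sr 1) 1 : MonoidAlgebra K (DihedralGroup n))} :=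
  .ofBijective
    ((DerSub.evalCentralizer (single_sr_mul_self 0)).prod
      (DerSub.evalCentralizer (single_sr_mul_self 1)))
    ⟨fun _ _ h ↦ derSub_dihedralAlgebra_ext (congrArg (·.1.1) h) (congrArg (·.2.1) h),
      fun ⟨a, b⟩ ↦
        let ⟨d, hda, hdb⟩ := exists_derSub_dihedralAlgebra_apply_eq hn (a.2 _ rfl) (b.2 _ rfl)
        ⟨d, Prod.ext (Subtype.ext hda) (Subtype.ext hdb)⟩⟩

end Derivations

theorem finrank_derivations_groupAlgebra_dihedral_even_general (n : ℕ) [NeZero n] (hn : Even n)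
    {K : Type*} [CommRing K] [CharP K 2] :
    Module.finrank K (DerSub K (MonoidAlgebra K (DihedralGroup n))) = 2 * n + 4 := by
  have : Nontrivial K := CharP.nontrivial_of_char_ne_one (v := 2) (by decide)
  rw [(derSubDihedralEquiv hn).finrank_eq, Module.finrank_prod, finrank_centralizer_single_sr hn,
    finrank_centralizer_single_sr hn]
  ring

/-- Let `n > 2` be even, `m ≥ 1` and `K` a finite field with `2 ^ m`
elements. Then the space `Der(K D_{2n})` of derivations of the group algebra of the dihedral
group of order `2n` is a `K`-vector space of dimension `2n + 4`. -/
theorem finrank_derivations_groupAlgebra_dihedral_even (n : ℕ) (hn : 2 < n) (hne : Even n)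
    (m : ℕ) (hm : 1 ≤ m) {K : Type*} [Field K] [Fintype K] (hK : Fintype.card K = 2 ^ m) :
    Module.finrank K (DerSub K (MonoidAlgebra K (DihedralGroup n))) = 2 * n + 4 := by
  have : NeZero n := ⟨by omega⟩
  have : CharP K 2 := charP_of_card_eq_prime_pow hK
  exact finrank_derivations_groupAlgebra_dihedral_even_general n hne
end
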